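/- Let N be a positive integer and δ₀ ∈ (0,1). There exists a constant c₀ > 0, depending only on N and δ₀, such that for all s, t with 0 < s < t < 1 and t − s ≥ δ₀, and every measurable set E ⊆ ℝ^N with |E| = m < ∞ and P_t(E) < ∞, the following bounds hold: (1−t)·P_t(E) ≤ 2·(F_{s,t}(E) + c₀·m) and s·P_s(E) ≤ c₀^{1 − s/t} · m^{1 − s/t} · (F_{s,t}(E) + c₀·m)^{s/t}. -/

import Mathlib

open MeasureTheory ENNReal

/-- Interaction energy `∫_A ∫_B |x-y|^{-(N+α)} dy dx` in `[0,∞]`. -/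
noncomputable def interEnergy (N : ℕ) (α : ℝ)
    (A B : Set (EuclideanSpace ℝ (Fin N))) : ℝ≥0∞ :=
  ∫⁻ x in A, ∫⁻ y in B, ENNReal.ofReal (‖x - y‖ ^ (-((N : ℝ) + α))) ∂volume ∂volume

/-- The fractional `α`-perimeter `P_α(E) = ∫_E ∫_{Eᶜ} |x-y|^{-(N+α)} dy dx`. -/
noncomputable def fracPer (N : ℕ) (α : ℝ) (E : Set (EuclideanSpace ℝ (Fin N))) : ℝ≥0∞ :=
  interEnergy N α E Eᶜ

/-- The free energy `F_{s,t}(E) = (1-t) P_t(E) - s P_s(E)`. -/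
noncomputable def freeEnergy (N : ℕ) (s t : ℝ) (E : Set (EuclideanSpace ℝ (Fin N))) : ℝ :=
  (1 - t) * (fracPer N t E).toReal - s * (fracPer N s E).toReal

/-!
Write `P_α(E) = ∫ γ(h) |h|^{-(N+α)} dh`, where `γ(h) = |{x ∈ E : x + h ∉ E}|` satisfies
`γ ≤ |E|` and `γ(2h) ≤ 2 γ(h)`. After rescaling by `2`, the doubling inequality shows that the part
of `P_t(E)` carried by `|h| ≤ 2ρ` is at most `2^{1-t} ≤ 1 + (1 - t)` times the part carried by
`|h| ≤ ρ`, so every dyadic annulus carries at most `(1 - t) P_t(E)`. Summing over the annuli inside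
the ball of radius `r`, and using `γ ≤ |E|` outside it, gives
`s P_s(E) ≤ 2 / (t - s) * r^{t-s} * (1 - t) P_t(E) + C |E| r^{-s}`. Optimizing in `r` yields
`s P_s(E) ≤ K |E|^{1-s/t} ((1 - t) P_t(E))^{s/t}`, and Young's inequality bounds this by
`(1 - t) P_t(E) / 2 + c₀ |E|`.
-/

open Set Metric Module

section RealInequalities

lemma two_rpow_le_one_add {x : ℝ} (hx₀ : 0 ≤ x) (hx₁ : x ≤ 1) : (2 : ℝ) ^ x ≤ 1 + x := by
  have bernoulli := rpow_one_add_le_one_add_mul_self (s := 1) (by norm_num) hx₀ hx₁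
  norm_num at bernoulli
  exact bernoulli

lemma half_rpow_le_one_sub_half {x : ℝ} (hx₀ : 0 ≤ x) (hx₁ : x ≤ 1) :
    (1 / 2 : ℝ) ^ x ≤ 1 - x / 2 := by
  have bernoulli := rpow_one_add_le_one_add_mul_self (s := -(1 / 2)) (by norm_num) hx₀ hx₁
  norm_num at bernoulli ⊢
  linarith

lemma tsum_ofReal_half_rpow_pow_le {x : ℝ} (hx₀ : 0 < x) (hx₁ : x ≤ 1) :
    ∑' k : ℕ, ENNReal.ofReal ((1 / 2) ^ x) ^ k ≤ ENNReal.ofReal (2 / x) := by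
  have bernoulli := half_rpow_le_one_sub_half hx₀.le hx₁
  rw [ENNReal.tsum_geometric, ← ENNReal.ofReal_one, ← ENNReal.ofReal_sub _ (by positivity),
    ← ENNReal.ofReal_inv_of_pos (by linarith), ← inv_div x 2]
  gcongr
  linarith

lemma le_mul_rpow_mul_rpow_of_forall_le_of_pos {s t a b A B m : ℝ} (ht : t ≠ 0)
    (hA : 0 < A) (hm : 0 < m)
    (hB : ∀ r > 0, B ≤ a * (r ^ (t - s) * A) + b * (m * r ^ (-s))) :
    B ≤ (a + b) * (m ^ (1 - s / t) * A ^ (s / t)) := by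
  -- This `r` balances the two terms: `r ^ (t - s) * A = m * r ^ (-s)`.
  set r : ℝ := (m / A) ^ t⁻¹
  have rpow_r (y : ℝ) : r ^ y = m ^ (y / t) * A ^ (-(y / t)) := by
    rw [← Real.rpow_mul (by positivity), Real.div_rpow hm.le hA.le, Real.rpow_neg hA.le,
      inv_mul_eq_div, div_eq_mul_inv]
  have near : r ^ (t - s) * A = m ^ (1 - s / t) * A ^ (s / t) := by
    rw [rpow_r, mul_assoc, ← Real.rpow_add_one hA.ne', sub_div, div_self ht]
    congr 2
    ring
  have far : m * r ^ (-s) = m ^ (1 - s / t) * A ^ (s / t) := by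
    rw [rpow_r, ← mul_assoc, mul_comm m, ← Real.rpow_add_one hm.ne', neg_div, neg_neg,
      neg_add_eq_sub]
  have hr := hB r (by positivity)
  rwa [near, far, ← add_mul] at hr

lemma le_mul_rpow_mul_rpow_of_forall_le {s t a b A B m : ℝ} (hs : 0 ≤ s) (hst : s ≤ t) (ht : 0 < t)
    (ha : 0 ≤ a) (hb : 0 ≤ b) (hA : 0 ≤ A) (hm : 0 ≤ m)
    (hB : ∀ r > 0, B ≤ a * (r ^ (t - s) * A) + b * (m * r ^ (-s))) :
    B ≤ (a + b) * (m ^ (1 - s / t) * A ^ (s / t)) := by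
  have hθ₀ : 0 ≤ s / t := by positivity
  have hθ₁ : 0 ≤ 1 - s / t := sub_nonneg.2 ((div_le_one ht).2 hst)
  have perturbed : ∀ ε > 0, B ≤ (a + b) * ((m + ε) ^ (1 - s / t) * (A + ε) ^ (s / t)) := by
    intro ε hε
    refine le_mul_rpow_mul_rpow_of_forall_le_of_pos ht.ne' (by positivity) (by positivity)
      fun r hr ↦ (hB r hr).trans ?_
    gcongr <;> linarith
  have cont : Continuous fun ε : ℝ ↦ (a + b) * ((m + ε) ^ (1 - s / t) * (A + ε) ^ (s / t)) := by
    fun_prop (disch := assumption)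
  have lim := (cont.tendsto 0).mono_left (nhdsWithin_le_nhds (s := Ioi 0))
  simp only [add_zero] at lim
  exact ge_of_tendsto lim (Filter.eventually_of_mem self_mem_nhdsWithin perturbed)

lemma mul_rpow_mul_rpow_le_mul_rpow_mul_half_rpow {θ δ K m A : ℝ} (hδ : 0 < δ)
    (hθδ : δ ≤ 1 - θ) (hK : 1 ≤ 2 * K) (hm : 0 ≤ m) (hA : 0 ≤ A) :
    K * (m ^ (1 - θ) * A ^ θ) ≤ ((2 * K) ^ δ⁻¹ * m) ^ (1 - θ) * (A / 2) ^ θ := by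
  have const_bound : K * 2 ^ θ ≤ ((2 * K) ^ δ⁻¹) ^ (1 - θ) :=
    calc K * 2 ^ θ ≤ K * 2 ^ (1 : ℝ) := by
          gcongr <;> linarith
      _ = 2 * K := by rw [Real.rpow_one, mul_comm]
      _ = ((2 * K) ^ δ⁻¹) ^ δ := by
          rw [← Real.rpow_mul (by linarith), inv_mul_cancel₀ hδ.ne', Real.rpow_one]
      _ ≤ ((2 * K) ^ δ⁻¹) ^ (1 - θ) := by
          gcongr
          exact Real.one_le_rpow hK (by positivity)
  calc K * (m ^ (1 - θ) * A ^ θ) = K * 2 ^ θ * (m ^ (1 - θ) * (A / 2) ^ θ) := by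
        rw [Real.div_rpow hA (by norm_num)]
        field_simp
    _ ≤ ((2 * K) ^ δ⁻¹) ^ (1 - θ) * (m ^ (1 - θ) * (A / 2) ^ θ) := by gcongr
    _ = ((2 * K) ^ δ⁻¹ * m) ^ (1 - θ) * (A / 2) ^ θ := by
        rw [Real.mul_rpow (by positivity) hm, mul_assoc]

lemma absorb_of_le_rpow_mul_half_rpow {θ y A B : ℝ} (hθ₀ : 0 ≤ θ) (hθ₁ : θ ≤ 1) (hy : 0 ≤ y)
    (hA : 0 ≤ A) (hB : B ≤ y ^ (1 - θ) * (A / 2) ^ θ) :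
    A ≤ 2 * (A - B + y) ∧ B ≤ y ^ (1 - θ) * (A - B + y) ^ θ := by
  have young : y ^ (1 - θ) * (A / 2) ^ θ ≤ (1 - θ) * y + θ * (A / 2) :=
    Real.geom_mean_le_arith_mean2_weighted (sub_nonneg.2 hθ₁) hθ₀ hy (by positivity) (by ring)
  have half_le : A / 2 ≤ A - B + y := by nlinarith
  refine ⟨by linarith, hB.trans ?_⟩
  gcongr

end RealInequalities

section TranslationDefect

variable {G : Type*} [AddCommGroup G] [MeasurableSpace G] {μ : Measure G} {E : Set G}

/-- The measure of the set of points of `E` that a translation by `h` moves out of `E`. It is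
`μ E` minus the covariogram of `E`, and records how `E` enters its nonlocal perimeters. -/
noncomputable def translationDefect (μ : Measure G) (E : Set G) (h : G) : ℝ≥0∞ :=
  μ (E \ (· + h) ⁻¹' E)

lemma translationDefect_le_measure (h : G) : translationDefect μ E h ≤ μ E :=
  measure_mono sdiff_subset

variable [MeasurableAdd₂ G] [μ.IsAddLeftInvariant]

lemma translationDefect_add_le (h k : G) :
    translationDefect μ E (h + k) ≤ translationDefect μ E h + translationDefect μ E k := by
  have subset_union : E \ (· + (h + k)) ⁻¹' E ⊆
      E \ (· + h) ⁻¹' E ∪ (· + h) ⁻¹' (E \ (· + k) ⁻¹' E) := by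
    intro x
    simp only [mem_sdiff, mem_preimage, mem_union, ← add_assoc]
    tauto
  calc translationDefect μ E (h + k)
      ≤ μ (E \ (· + h) ⁻¹' E) + μ ((· + h) ⁻¹' (E \ (· + k) ⁻¹' E)) :=
        (measure_mono subset_union).trans (measure_union_le _ _)
    _ = translationDefect μ E h + translationDefect μ E k := by
        rw [measure_preimage_add_right]
        rfl

lemma translationDefect_two_smul_le [Module ℝ G] (h : G) :
    translationDefect μ E ((2 : ℝ) • h) ≤ 2 * translationDefect μ E h := by
  rw [two_smul, two_mul]
  exact translationDefect_add_le h h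

lemma setLIntegral_setLIntegral_compl_sub_eq [SFinite μ] (hE : MeasurableSet E) {k : G → ℝ≥0∞}
    (hk : Measurable k) :
    ∫⁻ x in E, ∫⁻ y in Eᶜ, k (y - x) ∂μ ∂μ = ∫⁻ h, translationDefect μ E h * k h ∂μ := by
  have inner (x : G) :
      ∫⁻ y in Eᶜ, k (y - x) ∂μ = ∫⁻ h, ((x + ·) ⁻¹' Eᶜ).indicator 1 h * k h ∂μ := by
    rw [← lintegral_indicator hE.compl, ← lintegral_add_left_eq_self _ x]
    congr with h
    by_cases hxh : x + h ∈ E <;> simp [hxh]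
  have outer (h : G) : ∫⁻ x in E, ((x + ·) ⁻¹' Eᶜ).indicator 1 h * k h ∂μ =
      translationDefect μ E h * k h := by
    have hpre : MeasurableSet ((· + h) ⁻¹' Eᶜ) := (measurable_add_const h) hE.compl
    change ∫⁻ x in E, ((· + h) ⁻¹' Eᶜ).indicator 1 x * k h ∂μ = _
    rw [lintegral_mul_const _ (measurable_one.indicator hpre), lintegral_indicator_one hpre,
      Measure.restrict_apply hpre, inter_comm]
    rfl
  have hmeas : Measurable fun p : G × G ↦ ((p.1 + ·) ⁻¹' Eᶜ).indicator 1 p.2 * k p.2 :=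
    (measurable_one.indicator ((measurable_fst.add measurable_snd) hE.compl)).mul
      (hk.comp measurable_snd)
  simp_rw [inner]
  rw [lintegral_lintegral_swap hmeas.aemeasurable]
  simp_rw [outer]

end TranslationDefect

section DyadicAnnulus

/-- The annulus `r / 2 < |h| ≤ r`; those of radii `r / 2 ^ k` partition the punctured ball of
radius `r`. -/
def dyadicAnnulus (V : Type*) [SeminormedAddCommGroup V] (r : ℝ) : Set V :=
  closedBall 0 r \ closedBall 0 (r / 2)

lemma closedBall_sdiff_zero_subset_iUnion_dyadicAnnulus {V : Type*}
    [NormedAddCommGroup V] {r : ℝ} (hr : 0 < r) :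
    closedBall (0 : V) r \ {0} ⊆ ⋃ k : ℕ, dyadicAnnulus V (r * (1 / 2) ^ k) := by
  rintro h ⟨hle, hne⟩
  rw [mem_closedBall_zero_iff] at hle
  obtain ⟨k, lower, upper⟩ := exists_nat_pow_near_of_lt_one (div_pos (norm_pos_iff.2 hne) hr)
    ((div_le_one hr).2 hle) (one_half_pos (α := ℝ)) one_half_lt_one
  rw [lt_div_iff₀' hr, pow_succ] at lower
  rw [div_le_iff₀' hr] at upper
  refine mem_iUnion.2 ⟨k, mem_closedBall_zero_iff.2 upper, ?_⟩
  rw [mem_closedBall_zero_iff]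
  linarith

end DyadicAnnulus

section FracKernel

variable {V : Type*} [NormedAddCommGroup V] [NormedSpace ℝ V]

/-- The kernel `|h|^{-(N+α)}` of the fractional `α`-perimeter, with `N` the dimension of the space.
Unless `N + α = 0`, its value at the origin is the junk value `0`. -/
noncomputable def fracKernel (α : ℝ) (h : V) : ℝ≥0∞ :=
  ENNReal.ofReal (‖h‖ ^ (-(finrank ℝ V + α)))

lemma fracKernel_smul (α c : ℝ) (h : V) :
    fracKernel α (c • h) = ENNReal.ofReal (|c| ^ (-(finrank ℝ V + α))) * fracKernel α h := by
  rw [fracKernel, norm_smul, Real.norm_eq_abs, Real.mul_rpow (abs_nonneg c) (norm_nonneg h),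
    ENNReal.ofReal_mul (by positivity), fracKernel]

lemma fracKernel_le_mul_fracKernel {s t r : ℝ} (hst : s ≤ t) {h : V} (hh : h ≠ 0) (hr : ‖h‖ ≤ r) :
    fracKernel s h ≤ ENNReal.ofReal (r ^ (t - s)) * fracKernel t h := by
  have hpos : 0 < ‖h‖ := norm_pos_iff.2 hh
  have split : -(finrank ℝ V + s) = (t - s) + -(finrank ℝ V + t) := by ring
  rw [fracKernel, split, Real.rpow_add hpos, ENNReal.ofReal_mul (by positivity), fracKernel]
  gcongr

variable [MeasurableSpace V] [BorelSpace V]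

lemma measurable_fracKernel (α : ℝ) : Measurable (fracKernel α : V → ℝ≥0∞) := by
  unfold fracKernel
  fun_prop

variable {μ : Measure V}

lemma setLIntegral_dyadicAnnulus_mul_fracKernel_le_of_le (f : V → ℝ≥0∞) {s t r : ℝ} (hst : s ≤ t)
    (hr : 0 ≤ r) :
    ∫⁻ h in dyadicAnnulus V r, f h * fracKernel s h ∂μ ≤
      ENNReal.ofReal (r ^ (t - s)) * ∫⁻ h in dyadicAnnulus V r, f h * fracKernel t h ∂μ := by
  rw [← lintegral_const_mul' _ _ ENNReal.ofReal_ne_top]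
  refine setLIntegral_mono' (measurableSet_closedBall.diff measurableSet_closedBall)
    fun h ⟨upper, lower⟩ ↦ ?_
  rw [mem_closedBall_zero_iff] at upper lower
  have hne : h ≠ 0 := by
    rintro rfl
    exact lower (by rw [norm_zero]; positivity)
  rw [mul_left_comm]
  gcongr
  exact fracKernel_le_mul_fracKernel hst hne upper

variable [FiniteDimensional ℝ V] [μ.IsAddHaarMeasure]

lemma lintegral_eq_mul_lintegral_comp_smul (f : V → ℝ≥0∞) {c : ℝ} (hc : c ≠ 0) :
    ∫⁻ h, f h ∂μ = ENNReal.ofReal (|c| ^ finrank ℝ V) * ∫⁻ h, f (c • h) ∂μ := by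
  have change_var : ∫⁻ h, f (c • h) ∂μ = ∫⁻ h, f h ∂μ.map (c • ·) :=
    (lintegral_map_equiv f (Homeomorph.smulOfNeZero c hc).toMeasurableEquiv).symm
  rw [change_var, Measure.map_addHaar_smul μ hc, lintegral_smul_measure, smul_eq_mul, ← mul_assoc,
    ← ENNReal.ofReal_mul (by positivity), ← abs_pow, ← abs_mul,
    mul_inv_cancel₀ (pow_ne_zero _ hc), abs_one, ENNReal.ofReal_one, one_mul]

lemma setLIntegral_closedBall_mul_fracKernel_le {f : V → ℝ≥0∞}
    (hf : ∀ h, f ((2 : ℝ) • h) ≤ 2 * f h) (t r : ℝ) :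
    ∫⁻ h in closedBall 0 r, f h * fracKernel t h ∂μ ≤
      ENNReal.ofReal (2 ^ (1 - t)) * ∫⁻ h in closedBall 0 (r / 2), f h * fracKernel t h ∂μ := by
  have const_eq : ENNReal.ofReal (|2| ^ finrank ℝ V) *
      (2 * ENNReal.ofReal (|2| ^ (-(finrank ℝ V + t)))) = ENNReal.ofReal (2 ^ (1 - t)) := by
    have exponent : 1 - t = finrank ℝ V + (1 + -(finrank ℝ V + t)) := by ring
    rw [exponent, Real.rpow_add two_pos, Real.rpow_add two_pos, Real.rpow_natCast, Real.rpow_one,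
      ENNReal.ofReal_mul (by positivity), ENNReal.ofReal_mul zero_le_two, abs_two,
      ENNReal.ofReal_ofNat]
  have mem_iff (h : V) : (2 : ℝ) • h ∈ closedBall 0 r ↔ h ∈ closedBall 0 (r / 2) := by
    rw [mem_closedBall_zero_iff, mem_closedBall_zero_iff, norm_smul, Real.norm_ofNat,
      le_div_iff₀' two_pos]
  rw [← lintegral_indicator measurableSet_closedBall,
    ← lintegral_indicator measurableSet_closedBall,
    lintegral_eq_mul_lintegral_comp_smul _ two_ne_zero,
    ← lintegral_const_mul' _ _ (by simp), ← lintegral_const_mul' _ _ (by simp)]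
  refine lintegral_mono fun h ↦ ?_
  by_cases hh : h ∈ closedBall 0 (r / 2)
  · rw [indicator_of_mem ((mem_iff h).2 hh), indicator_of_mem hh, fracKernel_smul, ← const_eq]
    calc _ ≤ ENNReal.ofReal (|2| ^ finrank ℝ V) * (2 * f h *
            (ENNReal.ofReal (|2| ^ (-(finrank ℝ V + t))) * fracKernel t h)) := by
          gcongr
          exact hf h
      _ = _ := by ring
  · rw [indicator_of_notMem (mt (mem_iff h).1 hh)]
    simp

lemma setLIntegral_dyadicAnnulus_mul_fracKernel_le {f : V → ℝ≥0∞}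
    (hf : ∀ h, f ((2 : ℝ) • h) ≤ 2 * f h) {t r : ℝ} (ht₀ : 0 ≤ t) (ht₁ : t ≤ 1) (hr : 0 ≤ r)
    (hfin : ∫⁻ h, f h * fracKernel t h ∂μ ≠ ∞) :
    ∫⁻ h in dyadicAnnulus V r, f h * fracKernel t h ∂μ ≤
      ENNReal.ofReal (1 - t) * ∫⁻ h, f h * fracKernel t h ∂μ := by
  set I : Set V → ℝ≥0∞ := fun S ↦ ∫⁻ h in S, f h * fracKernel t h ∂μ
  have inner_le : I (closedBall 0 (r / 2)) ≤ ∫⁻ h, f h * fracKernel t h ∂μ :=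
    setLIntegral_le_lintegral _ _
  have split : I (closedBall 0 r) =
      I (closedBall 0 (r / 2)) + I (dyadicAnnulus V r) := by
    simp only [I]
    rw [← lintegral_inter_add_sdiff _ (closedBall 0 r) (measurableSet_closedBall (ε := r / 2)),
      inter_eq_self_of_subset_right (closedBall_subset_closedBall (by linarith)), dyadicAnnulus]
  have doubling : I (closedBall 0 r) ≤
      I (closedBall 0 (r / 2)) + ENNReal.ofReal (1 - t) * I (closedBall 0 (r / 2)) :=
    calc I (closedBall 0 r) ≤ ENNReal.ofReal (2 ^ (1 - t)) * I (closedBall 0 (r / 2)) :=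
          setLIntegral_closedBall_mul_fracKernel_le hf t r
      _ ≤ ENNReal.ofReal (1 + (1 - t)) * I (closedBall 0 (r / 2)) := by
          gcongr
          exact two_rpow_le_one_add (by linarith) (by linarith)
      _ = _ := by
          rw [ENNReal.ofReal_add zero_le_one (by linarith), ENNReal.ofReal_one, add_mul, one_mul]
  rw [split, ENNReal.add_le_add_iff_left (ne_top_of_le_ne_top hfin inner_le)] at doubling
  exact doubling.trans (by gcongr)

variable [Nontrivial V]

lemma setLIntegral_closedBall_mul_fracKernel_le_lintegral {f : V → ℝ≥0∞}
    (hf : ∀ h, f ((2 : ℝ) • h) ≤ 2 * f h) {s t r : ℝ} (hst : s < t) (hst₁ : t - s ≤ 1)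
    (ht₀ : 0 ≤ t) (ht₁ : t ≤ 1) (hr : 0 < r) (hfin : ∫⁻ h, f h * fracKernel t h ∂μ ≠ ∞) :
    ∫⁻ h in closedBall 0 r, f h * fracKernel s h ∂μ ≤
      ENNReal.ofReal (2 / (t - s) * r ^ (t - s) * (1 - t)) * ∫⁻ h, f h * fracKernel t h ∂μ := by
  set P := ∫⁻ h, f h * fracKernel t h ∂μ
  have annulus_le (k : ℕ) :
      ∫⁻ h in dyadicAnnulus V (r * (1 / 2) ^ k),
        f h * fracKernel s h ∂μ ≤
      ENNReal.ofReal ((1 / 2) ^ (t - s)) ^ k *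
        (ENNReal.ofReal (r ^ (t - s)) * (ENNReal.ofReal (1 - t) * P)) := by
    have radius_rpow : (r * (1 / 2) ^ k) ^ (t - s) = ((1 / 2) ^ (t - s)) ^ k * r ^ (t - s) := by
      rw [Real.mul_rpow hr.le (by positivity), mul_comm, Real.rpow_pow_comm (by norm_num)]
    refine (setLIntegral_dyadicAnnulus_mul_fracKernel_le_of_le f hst.le (by positivity)).trans ?_
    rw [radius_rpow, ENNReal.ofReal_mul (by positivity), ENNReal.ofReal_pow (by positivity),
      mul_assoc]
    gcongr
    exact setLIntegral_dyadicAnnulus_mul_fracKernel_le hf ht₀ ht₁ (by positivity) hfin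
  calc ∫⁻ h in closedBall 0 r, f h * fracKernel s h ∂μ
      = ∫⁻ h in closedBall 0 r \ {0}, f h * fracKernel s h ∂μ :=
        setLIntegral_congr (sdiff_null_ae_eq_self (measure_singleton 0)).symm
    _ ≤ ∑' k : ℕ, ∫⁻ h in dyadicAnnulus V (r * (1 / 2) ^ k),
          f h * fracKernel s h ∂μ :=
        (lintegral_mono_set (closedBall_sdiff_zero_subset_iUnion_dyadicAnnulus hr)).trans
          (lintegral_iUnion_le _ _)
    _ ≤ (∑' k : ℕ, ENNReal.ofReal ((1 / 2) ^ (t - s)) ^ k) *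
          (ENNReal.ofReal (r ^ (t - s)) * (ENNReal.ofReal (1 - t) * P)) := by
        rw [← ENNReal.tsum_mul_right]
        exact ENNReal.tsum_le_tsum annulus_le
    _ ≤ ENNReal.ofReal (2 / (t - s)) *
          (ENNReal.ofReal (r ^ (t - s)) * (ENNReal.ofReal (1 - t) * P)) := by
        gcongr
        exact tsum_ofReal_half_rpow_pow_le (by linarith) hst₁
    _ = ENNReal.ofReal (2 / (t - s) * r ^ (t - s) * (1 - t)) * P := by
        have : 0 < t - s := by linarith
        rw [ENNReal.ofReal_mul (by positivity), ENNReal.ofReal_mul (by positivity)]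
        ring

lemma setLIntegral_compl_closedBall_fracKernel {s r : ℝ} (hs : 0 < s) (hr : 0 < r) :
    ∫⁻ h in (closedBall 0 r)ᶜ, fracKernel s h ∂μ =
      ENNReal.ofReal (finrank ℝ V * μ.real (ball 0 1) * (r ^ (-s) / s)) := by
  set d := finrank ℝ V
  set g : ℝ → ℝ := (Ioi r).indicator fun y ↦ y ^ (-(d + s))
  have radial : EqOn (fun y ↦ y ^ (d - 1) • g y) ((Ioi r).indicator fun y ↦ y ^ (-s - 1))
      (Ioi 0) := by
    intro y hy
    by_cases hyr : y ∈ Ioi r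
    · simp only [g, indicator_of_mem hyr, smul_eq_mul]
      rw [← Real.rpow_natCast, Nat.cast_pred finrank_pos, ← Real.rpow_add hy]
      congr 1
      ring
    · simp [g, hyr]
  have inter_eq : Ioi 0 ∩ Ioi r = Ioi r := inter_eq_self_of_subset_right (Ioi_subset_Ioi hr.le)
  have integrable : Integrable (fun h : V ↦ g ‖h‖) μ := by
    rw [integrable_fun_norm_addHaar, integrableOn_congr_fun radial measurableSet_Ioi,
      IntegrableOn, integrable_indicator_iff measurableSet_Ioi, IntegrableOn,
      Measure.restrict_restrict measurableSet_Ioi, inter_comm, inter_eq]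
    exact integrableOn_Ioi_rpow_of_lt (by linarith) hr
  have integral_eq : ∫ h : V, g ‖h‖ ∂μ = d * μ.real (ball 0 1) * (r ^ (-s) / s) := by
    rw [integral_fun_norm_addHaar, setIntegral_congr_fun measurableSet_Ioi radial,
      setIntegral_indicator measurableSet_Ioi, inter_eq,
      integral_Ioi_rpow_of_lt (by linarith) hr, sub_add_cancel, neg_div_neg_eq, nsmul_eq_mul,
      smul_eq_mul, mul_assoc]
  have nonneg : 0 ≤ᵐ[μ] fun h : V ↦ g ‖h‖ :=
    ae_of_all _ fun h ↦ indicator_nonneg (fun y hy ↦ Real.rpow_nonneg (hr.trans hy).le _) _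
  rw [← integral_eq, ofReal_integral_eq_lintegral_ofReal integrable nonneg,
    ← lintegral_indicator measurableSet_closedBall.compl]
  congr with h
  by_cases hh : r < ‖h‖ <;> simp [g, hh, fracKernel, d]

lemma lintegral_mul_fracKernel_le {f : V → ℝ≥0∞} (hf : ∀ h, f ((2 : ℝ) • h) ≤ 2 * f h)
    {M : ℝ≥0∞} (hM : ∀ h, f h ≤ M) {s t r : ℝ} (hs : 0 < s) (hst : s < t) (ht : t ≤ 1)
    (hr : 0 < r) (hfin : ∫⁻ h, f h * fracKernel t h ∂μ ≠ ∞) :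
    ∫⁻ h, f h * fracKernel s h ∂μ ≤
      ENNReal.ofReal (2 / (t - s) * r ^ (t - s) * (1 - t)) * ∫⁻ h, f h * fracKernel t h ∂μ +
        M * ENNReal.ofReal (finrank ℝ V * μ.real (ball 0 1) * (r ^ (-s) / s)) := by
  rw [← lintegral_add_compl _ (measurableSet_closedBall (x := (0 : V)) (ε := r))]
  gcongr
  · exact setLIntegral_closedBall_mul_fracKernel_le_lintegral hf hst (by linarith) (by linarith)
      ht hr hfin
  · rw [← setLIntegral_compl_closedBall_fracKernel hs hr,
      ← lintegral_const_mul _ (measurable_fracKernel s)]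
    gcongr with h
    exact hM h

end FracKernel

section FracPer

variable {N : ℕ} {E : Set (EuclideanSpace ℝ (Fin N))}

lemma fracPer_eq_lintegral_translationDefect (α : ℝ) (hE : MeasurableSet E) :
    fracPer N α E = ∫⁻ h, translationDefect volume E h * fracKernel α h := by
  rw [← setLIntegral_setLIntegral_compl_sub_eq hE (measurable_fracKernel α)]
  simp only [fracPer, interEnergy, fracKernel, finrank_euclideanSpace_fin, norm_sub_rev]

variable [NeZero N] {s t : ℝ}

lemma mul_toReal_fracPer_le (hE : MeasurableSet E) (hE_fin : volume E ≠ ∞) (hs : 0 < s)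
    (hst : s < t) (ht : t ≤ 1) (hP : fracPer N t E ≠ ∞) {r : ℝ} (hr : 0 < r) :
    s * (fracPer N s E).toReal ≤
      2 / (t - s) * (r ^ (t - s) * ((1 - t) * (fracPer N t E).toReal)) +
        N * volume.real (ball (0 : EuclideanSpace ℝ (Fin N)) 1) *
          (volume.real E * r ^ (-s)) := by
  have hδ : 0 < t - s := sub_pos.2 hst
  have : 0 ≤ 1 - t := sub_nonneg.2 ht
  have bound := lintegral_mul_fracKernel_le (μ := volume) (translationDefect_two_smul_le (E := E))
    translationDefect_le_measure hs hst ht hr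
    (by rwa [← fracPer_eq_lintegral_translationDefect t hE])
  rw [← fracPer_eq_lintegral_translationDefect s hE,
    ← fracPer_eq_lintegral_translationDefect t hE, finrank_euclideanSpace_fin] at bound
  have real_bound := ENNReal.toReal_mono (by finiteness) bound
  rw [ENNReal.toReal_add (by finiteness) (by finiteness), ENNReal.toReal_mul, ENNReal.toReal_mul,
    ENNReal.toReal_ofReal (by positivity), ENNReal.toReal_ofReal (by positivity)] at real_bound
  calc s * (fracPer N s E).toReal
      ≤ s * (2 / (t - s) * r ^ (t - s) * (1 - t) * (fracPer N t E).toReal +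
          (volume E).toReal * (N * volume.real (ball (0 : EuclideanSpace ℝ (Fin N)) 1) *
            (r ^ (-s) / s))) := by gcongr
    _ = s * (2 / (t - s) * (r ^ (t - s) * ((1 - t) * (fracPer N t E).toReal))) +
        N * volume.real (ball (0 : EuclideanSpace ℝ (Fin N)) 1) *
          (volume.real E * r ^ (-s)) := by
      rw [measureReal_def volume E]
      field_simp
    _ ≤ 2 / (t - s) * (r ^ (t - s) * ((1 - t) * (fracPer N t E).toReal)) +
        N * volume.real (ball (0 : EuclideanSpace ℝ (Fin N)) 1) *
          (volume.real E * r ^ (-s)) := by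
      gcongr ?_ + _
      exact mul_le_of_le_one_left (by positivity) (by linarith)

lemma mul_toReal_fracPer_le_rpow_mul_rpow (hE : MeasurableSet E) (hE_fin : volume E ≠ ∞)
    (hs : 0 < s) (hst : s < t) (ht : t ≤ 1) (hP : fracPer N t E ≠ ∞) :
    s * (fracPer N s E).toReal ≤
      (2 / (t - s) + N * volume.real (ball (0 : EuclideanSpace ℝ (Fin N)) 1)) *
        (volume.real E ^ (1 - s / t) * ((1 - t) * (fracPer N t E).toReal) ^ (s / t)) := by
  have : 0 < t - s := sub_pos.2 hst
  have : 0 ≤ 1 - t := sub_nonneg.2 ht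
  exact le_mul_rpow_mul_rpow_of_forall_le hs.le hst.le (by linarith) (by positivity)
    (by positivity) (by positivity) (by positivity)
    fun _ ↦ mul_toReal_fracPer_le hE hE_fin hs hst ht hP

end FracPer

theorem stmt5 (N : ℕ) (hN : 0 < N) (δ₀ : ℝ) (hδ : δ₀ ∈ Set.Ioo (0 : ℝ) 1) :
    ∃ c₀ : ℝ, 0 < c₀ ∧ ∀ s t : ℝ, 0 < s → s < t → t < 1 → δ₀ ≤ t - s →
      ∀ (E : Set (EuclideanSpace ℝ (Fin N))) (m : ℝ), 0 ≤ m → MeasurableSet E →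
        volume E = ENNReal.ofReal m → fracPer N t E < ⊤ →
        (1 - t) * (fracPer N t E).toReal ≤ 2 * (freeEnergy N s t E + c₀ * m) ∧
        s * (fracPer N s E).toReal ≤
          c₀ ^ (1 - s / t) * m ^ (1 - s / t) *
            (freeEnergy N s t E + c₀ * m) ^ (s / t) := by
  obtain ⟨hδ₀, hδ₁⟩ := hδ
  have : NeZero N := ⟨hN.ne'⟩
  set ω : ℝ := volume.real (ball (0 : EuclideanSpace ℝ (Fin N)) 1)
  obtain ⟨K, hK_def⟩ : ∃ K : ℝ, K = 2 / δ₀ + N * ω := ⟨_, rfl⟩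
  have hK : 1 ≤ 2 * K := by
    have : 2 ≤ 2 / δ₀ := (le_div_iff₀ hδ₀).2 (by linarith)
    have : 0 ≤ N * ω := by positivity
    linarith
  refine ⟨(2 * K) ^ δ₀⁻¹, by positivity, fun s t hs hst ht hδ E m hm hE hvol hP ↦ ?_⟩
  have ht₀ : 0 < t := hs.trans hst
  have hA : 0 ≤ (1 - t) * (fracPer N t E).toReal := mul_nonneg (by linarith) toReal_nonneg
  have hθ₁ : s / t ≤ 1 := (div_le_one ht₀).2 hst.le
  have hθδ : δ₀ ≤ 1 - s / t := by
    rw [one_sub_div ht₀.ne', le_div_iff₀ ht₀]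
    nlinarith
  have interpolation : s * (fracPer N s E).toReal ≤
      K * (m ^ (1 - s / t) * ((1 - t) * (fracPer N t E).toReal) ^ (s / t)) := by
    have h := mul_toReal_fracPer_le_rpow_mul_rpow hE (by simp [hvol]) hs hst ht.le hP.ne
    rw [measureReal_def volume E, hvol, toReal_ofReal hm] at h
    exact h.trans (by rw [hK_def]; gcongr)
  have rescaled := interpolation.trans (mul_rpow_mul_rpow_le_mul_rpow_mul_half_rpow
    hδ₀ hθδ hK hm hA)
  rw [← Real.mul_rpow (by positivity) hm]
  exact absorb_of_le_rpow_mul_half_rpow (by positivity) hθ₁ (by positivity) hA rescaled
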